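/- Define the real polynomials f₁(q) = q^28+5q^26+2q^24-17q^22+61q^18+11q^16-68q^14+11q^12+61q^10-17q^6+2q^4+5q^2+1 and f₂(q) = 2q^27+4q^25-5q^23-13q^21+24q^19+36q^17-39q^15-39q^13+36q^11+24q^9-13q^7-5q^5+4q^3+2q. Then for every real number q ≥ √2, both f₁(q) + √2·f₂(q) > 0 and f₁(q) - √2·f₂(q) > 0. -/

import Mathlib

noncomputable def f₁ (q : ℝ) : ℝ :=
  q^28 + 5*q^26 + 2*q^24 - 17*q^22 + 61*q^18 + 11*q^16 - 68*q^14 + 11*q^12 + 61*q^10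
    - 17*q^6 + 2*q^4 + 5*q^2 + 1

noncomputable def f₂ (q : ℝ) : ℝ :=
  2*q^27 + 4*q^25 - 5*q^23 - 13*q^21 + 24*q^19 + 36*q^17 - 39*q^15 - 39*q^13 + 36*q^11
    + 24*q^9 - 13*q^7 - 5*q^5 + 4*q^3 + 2*q

/-!
Both polynomials are palindromic, `f₁` is even and `f₂` is odd. Hence `q⁻¹⁴ f₁(q)` and
`q⁻¹⁴ f₂(q) / (q + q⁻¹)` are polynomials in `(q - q⁻¹)²`, and they turn out to have positive
coefficients. Clearing denominators, `f₁(q) = A(q², (q² - 1)²)` and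
`f₂(q) = (q³ + q) B(q², (q² - 1)²)` with binary forms `A` and `B`. Since
`3√2 |q³ + q| ≤ (q² - 1)² + 9 q²`, the bound `√2 |f₂| < f₁` follows from
`(n + 9 m) B(m, n) < 3 A(m, n)`, which holds coefficientwise.
-/

section PalindromicForms

variable {R : Type*} [CommSemiring R]

/-- The binary form `A` of degree 7 with `f₁ q = A (q ^ 2) ((q ^ 2 - 1) ^ 2)`. It is the expansion
of `f₁` in powers of `(q - q⁻¹) ^ 2`, homogenized so that no division by `q` is needed. -/
def palindromicForm₁ (m n : R) : R :=
  n^7 + 19*n^6*m + 139*n^5*m^2 + 483*n^4*m^3 + 788*n^3*m^4 + 542*n^2*m^5 + 262*n*m^6 + 58*m^7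

/-- The binary form `B` of degree 6 with `f₂ q = (q ^ 3 + q) * B (q ^ 2) ((q ^ 2 - 1) ^ 2)`. The
factor `q ^ 3 + q` is split off because `f₂` is odd. -/
def palindromicForm₂ (m n : R) : R :=
  2*n^6 + 26*n^5*m + 121*n^4*m^2 + 232*n^3*m^3 + 164*n^2*m^4 + 82*n*m^5 + 9*m^6

variable [PartialOrder R] [IsStrictOrderedRing R] {m n : R}

lemma palindromicForm₂_nonneg (hm : 0 ≤ m) (hn : 0 ≤ n) :
    0 ≤ palindromicForm₂ m n := by
  unfold palindromicForm₂
  positivity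

lemma mul_palindromicForm₂_lt_three_mul_palindromicForm₁
    (hm : 0 ≤ m) (hn : 0 ≤ n) (hmn : 0 < m ∨ 0 < n) :
    (n + 9*m) * palindromicForm₂ m n < 3 * palindromicForm₁ m n := by
  have remainder_pos : 0 < n^7 + 13*n^6*m + 62*n^5*m^2 + 128*n^4*m^3 + 112*n^3*m^4
      + 68*n^2*m^5 + 39*n*m^6 + 93*m^7 := by
    rcases hmn with hm_pos | hn_pos <;> positivity
  have decomposition : 3 * palindromicForm₁ m n = (n + 9*m) * palindromicForm₂ m n
      + (n^7 + 13*n^6*m + 62*n^5*m^2 + 128*n^4*m^3 + 112*n^3*m^4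
        + 68*n^2*m^5 + 39*n*m^6 + 93*m^7) := by
    unfold palindromicForm₁ palindromicForm₂
    ring
  rw [decomposition]
  exact lt_add_of_pos_right _ remainder_pos

end PalindromicForms

lemma f₁_eq_palindromicForm₁ (q : ℝ) : f₁ q = palindromicForm₁ (q^2) ((q^2 - 1)^2) := by
  unfold f₁ palindromicForm₁
  ring

lemma f₂_eq_mul_palindromicForm₂ (q : ℝ) :
    f₂ q = (q^3 + q) * palindromicForm₂ (q^2) ((q^2 - 1)^2) := by
  unfold f₂ palindromicForm₂
  ring

lemma three_mul_abs_sqrt_two_mul_le (q : ℝ) :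
    3 * |√2 * (q^3 + q)| ≤ (q^2 - 1)^2 + 9*q^2 := by
  refine le_of_sq_le_sq ?_ (by positivity)
  calc (3 * |√2 * (q^3 + q)|)^2 = 18 * (q^3 + q)^2 := by
        rw [mul_pow, sq_abs, mul_pow, Real.sq_sqrt zero_le_two]
        ring
    _ ≤ 18 * (q^3 + q)^2 + (((q^2 - 1)^2)^2 + 9*(q^2)^2) :=
        le_add_of_nonneg_right (by positivity)
    _ = ((q^2 - 1)^2 + 9*q^2)^2 := by ring

lemma abs_sqrt_two_mul_f₂_lt_f₁ (q : ℝ) : |√2 * f₂ q| < f₁ q := by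
  rw [f₁_eq_palindromicForm₁, f₂_eq_mul_palindromicForm₂]
  set m := q^2
  set n := (m - 1)^2 with hn
  have m_nonneg : 0 ≤ m := sq_nonneg q
  have n_nonneg : 0 ≤ n := sq_nonneg (m - 1)
  have m_or_n_pos : 0 < m ∨ 0 < n := by
    rcases m_nonneg.eq_or_lt with m_eq_zero | m_pos
    · exact .inr (by simp [hn, ← m_eq_zero])
    · exact .inl m_pos
  have form₂_nonneg := palindromicForm₂_nonneg m_nonneg n_nonneg
  refine lt_of_mul_lt_mul_left ?_ (zero_le_three (α := ℝ))
  calc 3 * |√2 * ((q^3 + q) * palindromicForm₂ m n)|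
      = 3 * |√2 * (q^3 + q)| * palindromicForm₂ m n := by
        rw [← mul_assoc, abs_mul, abs_of_nonneg form₂_nonneg, mul_assoc]
    _ ≤ (n + 9*m) * palindromicForm₂ m n :=
        mul_le_mul_of_nonneg_right (three_mul_abs_sqrt_two_mul_le q) form₂_nonneg
    _ < 3 * palindromicForm₁ m n :=
        mul_palindromicForm₂_lt_three_mul_palindromicForm₁ m_nonneg n_nonneg m_or_n_pos

theorem f1_f2_pos_general (q : ℝ) :
    0 < f₁ q + Real.sqrt 2 * f₂ q ∧ 0 < f₁ q - Real.sqrt 2 * f₂ q := by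
  obtain ⟨neg_f₁_lt, lt_f₁⟩ := abs_lt.mp (abs_sqrt_two_mul_f₂_lt_f₁ q)
  exact ⟨by linarith, sub_pos.mpr lt_f₁⟩

theorem f1_f2_pos (q : ℝ) (hq : Real.sqrt 2 ≤ q) :
    0 < f₁ q + Real.sqrt 2 * f₂ q ∧ 0 < f₁ q - Real.sqrt 2 * f₂ q :=
  f1_f2_pos_general q
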